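/- If θ is an angle function for α, then for all (s, v): det(φ_s, φ_v, φ_sv) = f(s)·sin θ(s) = τ(s), and det(φ_s, φ_v, φ_ss) = v²·(f′(s)g(s) − f(s)g′(s)) + v·f′(s)·sin θ(s) − f(s)·sin θ(s)·cos θ(s) − v·f(s)·g(s)·cos θ(s), where det is the determinant of the 3×3 matrix whose rows are the given vectors. (These are the numerators of the second fundamental form coefficients M and L; the coefficient N = det(φ_s, φ_v, φ_vv)/√(EG−F²) vanishes since φ_vv = 0.) -/

import Mathlib

open RealInnerProductSpace

/-- Cross product on `EuclideanSpace ℝ (Fin 3)`. -/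
noncomputable def cross3 (u v : EuclideanSpace ℝ (Fin 3)) : EuclideanSpace ℝ (Fin 3) :=
  (EuclideanSpace.equiv (Fin 3) ℝ).symm
    (crossProduct ((EuclideanSpace.equiv (Fin 3) ℝ) u) ((EuclideanSpace.equiv (Fin 3) ℝ) v))

/-- Determinant of the 3×3 matrix whose rows are the given vectors. -/
noncomputable def det3 (u v w : EuclideanSpace ℝ (Fin 3)) : ℝ :=
  Matrix.det (Matrix.of ![(EuclideanSpace.equiv (Fin 3) ℝ) u,
    (EuclideanSpace.equiv (Fin 3) ℝ) v, (EuclideanSpace.equiv (Fin 3) ℝ) w])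

open scoped ContDiff

theorem cross3_apply (u v : EuclideanSpace ℝ (Fin 3)) :
    cross3 u v = !₂[u 1 * v 2 - u 2 * v 1, u 2 * v 0 - u 0 * v 2, u 0 * v 1 - u 1 * v 0] := by
  ext i
  fin_cases i <;> simp [cross3, cross_apply]

theorem det3_apply (u v w : EuclideanSpace ℝ (Fin 3)) :
    det3 u v w = u 0 * v 1 * w 2 - u 0 * v 2 * w 1 - u 1 * v 0 * w 2 + u 1 * v 2 * w 0
      + u 2 * v 0 * w 1 - u 2 * v 1 * w 0 := by
  simp [det3, Matrix.det_fin_three]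

theorem inner_fin_three (u v : EuclideanSpace ℝ (Fin 3)) :
    ⟪u, v⟫ = u 0 * v 0 + u 1 * v 1 + u 2 * v 2 := by
  simp [PiLp.inner_apply, Fin.sum_univ_three, mul_comm]

theorem inner_left_cross3 (u v : EuclideanSpace ℝ (Fin 3)) : ⟪u, cross3 u v⟫ = 0 := by
  simp [inner_fin_three, cross3_apply]; ring

theorem inner_right_cross3 (u v : EuclideanSpace ℝ (Fin 3)) : ⟪v, cross3 u v⟫ = 0 := by
  simp [inner_fin_three, cross3_apply]; ring

theorem inner_cross3_self (u v : EuclideanSpace ℝ (Fin 3)) :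
    ⟪cross3 u v, cross3 u v⟫ = ⟪u, u⟫ * ⟪v, v⟫ - ⟪u, v⟫ ^ 2 := by
  simp only [inner_fin_three, cross3_apply]; simp; ring

theorem det3_cross3 (u v : EuclideanSpace ℝ (Fin 3)) :
    det3 u v (cross3 u v) = ⟪u, u⟫ * ⟪v, v⟫ - ⟪u, v⟫ ^ 2 := by
  simp only [inner_fin_three, cross3_apply, det3_apply]; simp; ring

theorem ContDiff.cross3 {n : WithTop ℕ∞} {u v : ℝ → EuclideanSpace ℝ (Fin 3)}
    (hu : ContDiff ℝ n u) (hv : ContDiff ℝ n v) :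
    ContDiff ℝ n (fun s => cross3 (u s) (v s)) := by
  have hu' := contDiff_euclidean.1 hu
  have hv' := contDiff_euclidean.1 hv
  rw [contDiff_euclidean]
  intro i
  fin_cases i <;> simp only [cross3_apply] <;> simp <;>
    exact ((hu' _).mul (hv' _)).sub ((hu' _).mul (hv' _))

/-- Determinant of vectors expanded in the frame obtained from `t, n, b` by rotating
the plane spanned by `t, b` through the angle `x`. -/
theorem det3_rotated_frame (t n b : EuclideanSpace ℝ (Fin 3)) (x a₁ a₂ a₃ p₁ p₂ p₃ : ℝ)
    (c w : EuclideanSpace ℝ (Fin 3))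
    (hc : c = (-Real.cos x) • t + Real.sin x • b) (hw : w = Real.sin x • t + Real.cos x • b) :
    det3 (a₁ • n + a₂ • c + a₃ • w) c (p₁ • n + p₂ • c + p₃ • w) =
      (a₁ * p₃ - a₃ * p₁) * det3 t n b := by
  have key : det3 (a₁ • n + a₂ • c + a₃ • w) c (p₁ • n + p₂ • c + p₃ • w) =
      (a₁ * p₃ - a₃ * p₁) * det3 n c w := by
    simp only [det3_apply, PiLp.add_apply, PiLp.smul_apply, smul_eq_mul]; ring
  have rot : det3 n c w = (Real.sin x ^ 2 + Real.cos x ^ 2) * det3 t n b := by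
    subst hc hw
    simp only [det3_apply, PiLp.add_apply, PiLp.smul_apply, smul_eq_mul]; ring
  rw [key, rot, Real.sin_sq_add_cos_sq, one_mul]

theorem Orthonormal.eq_inner_expansion {t n b : EuclideanSpace ℝ (Fin 3)}
    (h : Orthonormal ℝ ![t, n, b]) (x : EuclideanSpace ℝ (Fin 3)) :
    x = ⟪t, x⟫ • t + ⟪n, x⟫ • n + ⟪b, x⟫ • b := by
  have hspan := h.linearIndependent.span_eq_top_of_card_eq_finrank' (by simp)
  have := (OrthonormalBasis.mk h hspan.ge).sum_repr' x
  simpa [Fin.sum_univ_three] using this.symm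

theorem orthonormal_cross3 {t n : EuclideanSpace ℝ (Fin 3)}
    (ht : ⟪t, t⟫ = 1) (hn : ⟪n, n⟫ = 1) (htn : ⟪t, n⟫ = 0) :
    Orthonormal ℝ ![t, n, cross3 t n] := by
  rw [orthonormal_iff_ite]
  intro i j
  fin_cases i <;> fin_cases j <;>
    simp [-inner_self_eq_norm_sq_to_K, ht, hn, htn, inner_left_cross3, inner_right_cross3,
      inner_cross3_self,
      real_inner_comm t n, real_inner_comm t (cross3 t n), real_inner_comm n (cross3 t n)]

/-- Moving the derivative across a constant inner product changes the sign. -/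
theorem inner_deriv_eq_neg {u v : ℝ → EuclideanSpace ℝ (Fin 3)}
    (hu : Differentiable ℝ u) (hv : Differentiable ℝ v) {c : ℝ} (h : ∀ s, ⟪u s, v s⟫ = c) (s : ℝ) :
    ⟪u s, deriv v s⟫ = -⟪v s, deriv u s⟫ := by
  have h1 := (hu s).hasDerivAt.inner ℝ (hv s).hasDerivAt
  have h2 : HasDerivAt (fun s => ⟪u s, v s⟫) 0 s := by
    simpa only [h] using hasDerivAt_const s c
  have := h1.unique h2
  rw [real_inner_comm (deriv u s)]
  linarith

theorem stmt_10
    (α : ℝ → EuclideanSpace ℝ (Fin 3))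
    (hα : ContDiff ℝ (⊤ : ℕ∞) α)
    (hunit : ∀ s, ‖deriv α s‖ = 1)
    (T : ℝ → EuclideanSpace ℝ (Fin 3)) (hT : ∀ s, T s = deriv α s)
    (κ : ℝ → ℝ) (hκ : ∀ s, κ s = ‖deriv (deriv α) s‖) (hκpos : ∀ s, 0 < κ s)
    (N : ℝ → EuclideanSpace ℝ (Fin 3)) (hN : ∀ s, N s = (κ s)⁻¹ • deriv (deriv α) s)
    (B : ℝ → EuclideanSpace ℝ (Fin 3)) (hB : ∀ s, B s = cross3 (T s) (N s))
    (τ : ℝ → ℝ) (hτ : ∀ s, τ s = ⟪deriv N s, B s⟫)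
    (f : ℝ → ℝ) (hf : ∀ s, f s = Real.sqrt (κ s ^ 2 + τ s ^ 2))
    (g : ℝ → ℝ) (hg : ∀ s, g s = κ s ^ 2 / (κ s ^ 2 + τ s ^ 2) * deriv (fun u => τ u / κ u) s)
    (C : ℝ → EuclideanSpace ℝ (Fin 3))
    (hC : ∀ s, C s = (Real.sqrt (κ s ^ 2 + τ s ^ 2))⁻¹ • ((-κ s) • T s + τ s • B s))
    (W : ℝ → EuclideanSpace ℝ (Fin 3))
    (hW : ∀ s, W s = (Real.sqrt (κ s ^ 2 + τ s ^ 2))⁻¹ • (τ s • T s + κ s • B s))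
    (θ : ℝ → ℝ) (hθdiff : Differentiable ℝ θ)
    (hθderiv : ∀ s, deriv θ s = g s)
    (hθκ : ∀ s, κ s = f s * Real.cos (θ s))
    (hθτ : ∀ s, τ s = f s * Real.sin (θ s))
    (φs φv : ℝ → ℝ → EuclideanSpace ℝ (Fin 3))
    (hφs : ∀ s v, φs s v = deriv (fun u => α u + v • C u) s)
    (hφv : ∀ s v, φv s v = deriv (fun w => α s + w • C s) v)
    (φss φsv φvv : ℝ → ℝ → EuclideanSpace ℝ (Fin 3))
    (hφss : ∀ s v, φss s v = deriv (fun u => φs u v) s)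
    (hφsv : ∀ s v, φsv s v = deriv (fun u => φv u v) s)
    (hφvv : ∀ s v, φvv s v = deriv (fun w => φv s w) v) :
    ∀ (s v : ℝ),
      det3 (φs s v) (φv s v) (φsv s v) = f s * Real.sin (θ s) ∧
      f s * Real.sin (θ s) = τ s ∧
      det3 (φs s v) (φv s v) (φss s v) =
        v ^ 2 * (deriv f s * g s - f s * deriv g s) + v * deriv f s * Real.sin (θ s) -
          f s * Real.sin (θ s) * Real.cos (θ s) - v * f s * g s * Real.cos (θ s) ∧
      φvv s v = 0 ∧
      det3 (φs s v) (φv s v) (φvv s v) = 0 := by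
  have hT_eq : T = deriv α := funext hT
  have sT : ContDiff ℝ ∞ T := hT_eq ▸ contDiff_infty_iff_deriv.1 hα |>.2
  have sT' : ContDiff ℝ ∞ (deriv T) := (contDiff_infty_iff_deriv.1 sT).2
  simp only [← hT_eq] at hκ hN hunit
  have hκ0 : ∀ s, κ s ≠ 0 := fun s => (hκpos s).ne'
  have sκ : ContDiff ℝ ∞ κ := by
    rw [funext hκ]
    exact sT'.norm ℝ fun s => norm_pos_iff.1 (hκ s ▸ hκpos s)
  have sN : ContDiff ℝ ∞ N := by
    rw [funext hN]
    exact (sκ.inv hκ0).smul sT'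
  have sB : ContDiff ℝ ∞ B := by
    rw [funext hB]
    exact sT.cross3 sN
  have sτ : ContDiff ℝ ∞ τ := by
    rw [funext hτ]
    exact (contDiff_infty_iff_deriv.1 sN).2.inner ℝ sB
  have hpos : ∀ s, 0 < κ s ^ 2 + τ s ^ 2 := fun s => by have := hκpos s; positivity
  have sf : ContDiff ℝ ∞ f := by
    rw [funext hf]
    exact ((sκ.pow 2).add (sτ.pow 2)).sqrt fun s => (hpos s).ne'
  have sg : ContDiff ℝ ∞ g := by
    rw [funext hg]
    exact ((sκ.pow 2).div ((sκ.pow 2).add (sτ.pow 2)) fun s => (hpos s).ne').mul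
      (contDiff_infty_iff_deriv.1 (sτ.div sκ hκ0)).2
  have dT := sT.differentiable (by simp)
  have dN := sN.differentiable (by simp)
  have dB := sB.differentiable (by simp)
  have df := sf.differentiable (by simp)
  have dg := sg.differentiable (by simp)
  have T'_eq : ∀ s, deriv T s = κ s • N s := fun s => by
    rw [hN, smul_smul, mul_inv_cancel₀ (hκ0 s), one_smul]
  -- the Frenet frame is orthonormal
  have hTT : ∀ s, ⟪T s, T s⟫ = 1 := fun s => by
    rw [real_inner_self_eq_norm_sq, hunit, one_pow]
  have hNN : ∀ s, ⟪N s, N s⟫ = 1 := fun s => by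
    rw [real_inner_self_eq_norm_sq, hN, norm_smul, ← hκ, norm_inv, Real.norm_of_nonneg (hκpos s).le,
      inv_mul_cancel₀ (hκ0 s), one_pow]
  have hTN : ∀ s, ⟪T s, N s⟫ = 0 := fun s => by
    have h := inner_deriv_eq_neg dT dT hTT s
    rw [hN, inner_smul_right]
    have : ⟪T s, deriv T s⟫ = 0 := by linarith
    rw [this, mul_zero]
  have hTB : ∀ s, ⟪T s, B s⟫ = 0 := fun s => by rw [hB, inner_left_cross3]
  have hNB : ∀ s, ⟪N s, B s⟫ = 0 := fun s => by rw [hB, inner_right_cross3]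
  have hBB : ∀ s, ⟪B s, B s⟫ = 1 := fun s => by
    rw [hB, inner_cross3_self, hTT, hNN, hTN]; norm_num
  have hdet : ∀ s, det3 (T s) (N s) (B s) = 1 := fun s => by
    rw [hB, det3_cross3, hTT, hNN, hTN]; norm_num
  have frame : ∀ s, Orthonormal ℝ ![T s, N s, B s] := fun s => by
    rw [hB]; exact orthonormal_cross3 (hTT s) (hNN s) (hTN s)
  -- the Frenet equations
  have N'_eq : ∀ s, deriv N s = (-κ s) • T s + τ s • B s := fun s => by
    have h1 : ⟪T s, deriv N s⟫ = -κ s := by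
      rw [inner_deriv_eq_neg dT dN hTN, T'_eq, inner_smul_right, hNN, mul_one]
    have h2 : ⟪N s, deriv N s⟫ = 0 := by
      have := inner_deriv_eq_neg dN dN hNN s
      linarith
    have h3 : ⟪B s, deriv N s⟫ = τ s := by rw [hτ, real_inner_comm]
    rw [(frame s).eq_inner_expansion (deriv N s), h1, h2, h3, zero_smul, add_zero]
  have B'_eq : ∀ s, deriv B s = (-τ s) • N s := fun s => by
    have h1 : ⟪T s, deriv B s⟫ = 0 := by
      rw [inner_deriv_eq_neg dT dB hTB, T'_eq, inner_smul_right, real_inner_comm, hNB, mul_zero,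
        neg_zero]
    have h2 : ⟪N s, deriv B s⟫ = -τ s := by
      rw [inner_deriv_eq_neg dN dB hNB, hτ, real_inner_comm]
    have h3 : ⟪B s, deriv B s⟫ = 0 := by
      have := inner_deriv_eq_neg dB dB hBB s
      linarith
    rw [(frame s).eq_inner_expansion (deriv B s), h1, h2, h3, zero_smul, zero_smul, zero_add,
      add_zero]
  -- the alternative frame is the Frenet frame rotated by the angle function
  have hf0 : ∀ s, f s ≠ 0 := fun s => by rw [hf]; exact (Real.sqrt_pos.2 (hpos s)).ne'
  have cos_eq : ∀ s, (f s)⁻¹ * κ s = Real.cos (θ s) := fun s => by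
    rw [hθκ, inv_mul_cancel_left₀ (hf0 s)]
  have sin_eq : ∀ s, (f s)⁻¹ * τ s = Real.sin (θ s) := fun s => by
    rw [hθτ, inv_mul_cancel_left₀ (hf0 s)]
  have C_eq : ∀ s, C s = (-Real.cos (θ s)) • T s + Real.sin (θ s) • B s := fun s => by
    rw [hC, ← hf, smul_add, smul_smul, smul_smul, mul_neg, cos_eq, sin_eq]
  have W_eq : ∀ s, W s = Real.sin (θ s) • T s + Real.cos (θ s) • B s := fun s => by
    rw [hW, ← hf, smul_add, smul_smul, smul_smul, cos_eq, sin_eq]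
  have hT_CW : ∀ s, T s = (-Real.cos (θ s)) • C s + Real.sin (θ s) • W s := fun s => by
    have h := Real.sin_sq_add_cos_sq (θ s)
    rw [C_eq, W_eq]
    linear_combination (norm := module) (-h) • T s
  have hθ' : ∀ s, HasDerivAt θ (g s) s := fun s => hθderiv s ▸ (hθdiff s).hasDerivAt
  have hT' : ∀ s, HasDerivAt T (κ s • N s) s := fun s => T'_eq s ▸ (dT s).hasDerivAt
  have hB' : ∀ s, HasDerivAt B ((-τ s) • N s) s := fun s => B'_eq s ▸ (dB s).hasDerivAt
  have hN' : ∀ s, HasDerivAt N (f s • C s) s := fun s => by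
    have h : f s • C s = deriv N s := by
      rw [N'_eq, hC, ← hf, smul_inv_smul₀ (hf0 s)]
    exact h ▸ (dN s).hasDerivAt
  have hC' : ∀ s, HasDerivAt C ((-f s) • N s + g s • W s) s := fun s => by
    have h := ((hθ' s).cos.neg.smul (hT' s)).add ((hθ' s).sin.smul (hB' s))
    rw [funext C_eq]
    refine h.congr_deriv ?_
    have h' := Real.sin_sq_add_cos_sq (θ s)
    rw [W_eq, hθκ, hθτ, Pi.neg_apply]
    linear_combination (norm := module) (-(f s) * h') • N s
  have hW' : ∀ s, HasDerivAt W ((-g s) • C s) s := fun s => by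
    have h := ((hθ' s).sin.smul (hT' s)).add ((hθ' s).cos.smul (hB' s))
    rw [funext W_eq]
    refine h.congr_deriv ?_
    rw [C_eq, hθκ, hθτ]
    module
  -- the partial derivatives of the surface in the alternative frame
  have φv_eq : ∀ s v, φv s v = C s := fun s v => by
    rw [hφv]
    simpa using (((hasDerivAt_id v).smul_const (C s)).const_add (α s)).deriv
  have φsv_eq : ∀ s v, φsv s v = (-f s) • N s + (0 : ℝ) • C s + g s • W s := fun s v => by
    simp only [hφsv, φv_eq, (hC' s).deriv, zero_smul, add_zero]
  have φvv_eq : ∀ s v, φvv s v = 0 := fun s v => by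
    simp only [hφvv, φv_eq, deriv_const]
  have hα' : ∀ s, HasDerivAt α (T s) s := fun s =>
    hT s ▸ (hα.differentiable (by simp) s).hasDerivAt
  have φs_fun : ∀ s v, φs s v = T s + v • ((-f s) • N s + g s • W s) := fun s v => by
    rw [hφs]
    exact ((hα' s).add ((hC' s).const_smul v)).deriv
  have φs_eq : ∀ s v, φs s v =
      (-(v * f s)) • N s + (-Real.cos (θ s)) • C s + (Real.sin (θ s) + v * g s) • W s :=
    fun s v => by
      rw [φs_fun]
      linear_combination (norm := module) hT_CW s
  have φss_eq : ∀ s v, φss s v = (f s * Real.cos (θ s) - v * deriv f s) • N s +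
      (-v * (f s ^ 2 + g s ^ 2)) • C s + (v * deriv g s) • W s := fun s v => by
    have h := (hT' s).add (((((df s).hasDerivAt.neg.smul (hN' s)).add
      ((dg s).hasDerivAt.smul (hW' s)))).const_smul v)
    simp only [hφss, φs_fun]
    refine h.deriv.trans ?_
    rw [hθκ]
    simp only [Pi.neg_apply]
    module
  intro s v
  refine ⟨?_, (hθτ s).symm, ?_, φvv_eq s v, ?_⟩
  · rw [φs_eq, φv_eq, φsv_eq, det3_rotated_frame _ _ _ _ _ _ _ _ _ _ _ _ (C_eq s) (W_eq s), hdet]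
    ring
  · rw [φs_eq, φv_eq, φss_eq, det3_rotated_frame _ _ _ _ _ _ _ _ _ _ _ _ (C_eq s) (W_eq s), hdet]
    ring
  · simp [φvv_eq, det3_apply]
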